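/- arXiv:2305.00102 — 2 statements merged into one kernel-verified Lean document; each statement's English description precedes it below -/
import Mathlib

section
/- Let P and Q be lower primes. Then PQ − QP lies in the two-sided ideal of 𝒜 generated by the set {(RL)·D − D·(RL) : D is a lower prime}, where RL denotes the two-letter word consisting of R followed by L. -/
/-!
Modulo the ideal `I` generated by the commutators `[RL, D]`, `RL` commutes with every lower prime,
hence with every product of lower primes. Reading `L` and `R` as the up and down steps of a lattice
path, the products of lower primes are exactly the Dyck words, and the lower primes are exactly the
words `L B R` with `B` a Dyck word (`lowerPrime_nest`, `LowerPrime.exists_nest`).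

For Dyck words `B` and `C`, modulo `I`,
`(L B R)(L C R) = L B (RL) C R = L (RL) (B C) R`, and symmetrically with `B` and `C` exchanged.
So `L B R` and `L C R` commute as soon as the shorter words `B` and `C` do. Induction on length,
decomposing each Dyck word at its first return, shows that any two Dyck words commute modulo `I`
(`commute_dyck`).
-/


/-- A word is a finite sequence of letters; the letter `L` is `false`, the letter `R` is `true`. -/
abbrev Word := List Bool

/-- A word is balanced if it contains equally many `L`s and `R`s. -/
def BalancedWord (w : Word) : Prop := w.count true = w.count false

/-- The element of the free `ℂ`-algebra on two generators corresponding to a word. -/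
noncomputable def toA (w : Word) : FreeAlgebra ℂ Bool :=
  (w.map (FreeAlgebra.ι ℂ)).prod

/-- The set `S = {FG - GF : F, G nonempty balanced words}`. -/
def Sset : Set (FreeAlgebra ℂ Bool) :=
  {x | ∃ F G : Word, F ≠ [] ∧ G ≠ [] ∧ BalancedWord F ∧ BalancedWord G ∧
    x = toA F * toA G - toA G * toA F}

/-- The two-sided ideal `𝒥` generated by `S`. -/
noncomputable def Jideal : TwoSidedIdeal (FreeAlgebra ℂ Bool) := TwoSidedIdeal.span Sset

/-- `X ∼ Y` iff `X - Y ∈ 𝒥`. -/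
def WEquiv (X Y : Word) : Prop := toA X - toA Y ∈ Jideal

/-- Words `X` and `Y` are related by a swap of type `(F, G)`. -/
def SwapOfType (F G X Y : Word) : Prop :=
  ∃ W₁ W₂ : Word,
    (X = W₁ ++ F ++ G ++ W₂ ∧ Y = W₁ ++ G ++ F ++ W₂) ∨
    (X = W₁ ++ G ++ F ++ W₂ ∧ Y = W₁ ++ F ++ G ++ W₂)

/-- Words `X` and `Y` are related by a swap. -/
def RelatedBySwap (X Y : Word) : Prop :=
  ∃ F G : Word, F ≠ [] ∧ G ≠ [] ∧ BalancedWord F ∧ BalancedWord G ∧ SwapOfType F G X Y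

/-- The `k`-th elevation of a word: number of `R`s minus number of `L`s among the
first `k` letters. -/
def elev (w : Word) (k : ℕ) : ℤ :=
  ((w.take k).count true : ℤ) - ((w.take k).count false : ℤ)

/-- The elevation multiset `E(W) = {e_k(W) : 0 ≤ k ≤ n}`. -/
def elevMultiset (w : Word) : Multiset ℤ :=
  (Multiset.range (w.length + 1)).map (elev w)

/-- A word is prime if it is nonempty, balanced, and cannot be written as the
product of two nonempty balanced words. -/
def IsPrimeWord (w : Word) : Prop :=
  w ≠ [] ∧ BalancedWord w ∧
    ¬ ∃ u v : Word, u ≠ [] ∧ v ≠ [] ∧ BalancedWord u ∧ BalancedWord v ∧ w = u ++ v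

/-- An upper prime: a prime word with `e_k > 0` for `1 ≤ k ≤ n - 1`. -/
def UpperPrime (w : Word) : Prop :=
  IsPrimeWord w ∧ ∀ k, 1 ≤ k → k ≤ w.length - 1 → 0 < elev w k

/-- A lower prime: a prime word with `e_k < 0` for `1 ≤ k ≤ n - 1`. -/
def LowerPrime (w : Word) : Prop :=
  IsPrimeWord w ∧ ∀ k, 1 ≤ k → k ≤ w.length - 1 → elev w k < 0

/-- A word is reduced if it contains no contiguous subword `UD` with `U` an
upper prime and `D` a lower prime. -/
def Reduced (W : Word) : Prop :=
  ¬ ∃ U D W₁ W₂ : Word, UpperPrime U ∧ LowerPrime D ∧ W = W₁ ++ U ++ D ++ W₂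

/-- Alphabetical (lexicographic) order on words, with `L < R`. -/
def WordLt (X Y : Word) : Prop := List.Lex (· < ·) X Y

/-- The letter of a Dyck step: up steps are `L`, down steps are `R`, so that the elevation of the
word is minus the height of the path. -/
def stepLetter : DyckStep → Bool
  | .U => false
  | .D => true

/-- The Dyck step of a letter, inverse to `stepLetter`. -/
def letterStep : Bool → DyckStep
  | false => .U
  | true => .D

/-- The word spelled by a Dyck path. -/
def dyckWord (p : DyckWord) : Word := p.toList.map stepLetter

lemma stepLetter_injective : Function.Injective stepLetter := by
  intro a b h
  cases a <;> cases b <;> simp_all [stepLetter]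

lemma letterStep_injective : Function.Injective letterStep := by
  intro a b h
  cases a <;> cases b <;> simp_all [letterStep]

lemma toA_append (u v : Word) : toA (u ++ v) = toA u * toA v := by
  simp [toA]

lemma dyckWord_add (p q : DyckWord) : dyckWord (p + q) = dyckWord p ++ dyckWord q :=
  List.map_append

lemma dyckWord_nest (p : DyckWord) : dyckWord p.nest = [false] ++ dyckWord p ++ [true] := by
  simp [dyckWord, DyckWord.nest, stepLetter]

lemma count_map_stepLetter (l : List DyckStep) :
    (l.map stepLetter).count false = l.count .U ∧ (l.map stepLetter).count true = l.count .D :=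
  ⟨List.count_map_of_injective l _ stepLetter_injective .U,
    List.count_map_of_injective l _ stepLetter_injective .D⟩

lemma count_map_letterStep (w : Word) :
    (w.map letterStep).count .U = w.count false ∧ (w.map letterStep).count .D = w.count true :=
  ⟨List.count_map_of_injective w _ letterStep_injective false,
    List.count_map_of_injective w _ letterStep_injective true⟩

lemma lowerPrime_nest (p : DyckWord) : LowerPrime (dyckWord p.nest) := by
  have hneg : ∀ k, 1 ≤ k → k ≤ (dyckWord p.nest).length - 1 → elev (dyckWord p.nest) k < 0 := by
    intro k hk hk'
    have hlen : (dyckWord p.nest).length = p.nest.toList.length := by simp [dyckWord]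
    have h := (DyckWord.IsNested.nest (p := p)).2 (i := k) (by omega) (by omega)
    have hc := count_map_stepLetter (p.nest.toList.take k)
    rw [elev, dyckWord, ← List.map_take, hc.1, hc.2]
    omega
  refine ⟨⟨by simp [dyckWord_nest], ?_, ?_⟩, hneg⟩
  · have hc := count_map_stepLetter p.nest.toList
    rw [BalancedWord, dyckWord, hc.1, hc.2, p.nest.count_U_eq_count_D]
  · -- At a splitting point into balanced words the elevation would vanish.
    rintro ⟨u, v, hu, hv, hbu, -, h⟩
    have hu' := List.length_pos_of_ne_nil hu
    have hv' := List.length_pos_of_ne_nil hv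
    have := hneg u.length hu' (by rw [h, List.length_append]; omega)
    rw [h, elev, List.take_left, hbu] at this
    omega

lemma LowerPrime.exists_nest {w : Word} (hw : LowerPrime w) :
    ∃ p : DyckWord, w = dyckWord p.nest := by
  obtain ⟨⟨hne, hbal, -⟩, hneg⟩ := hw
  have hlt : ∀ k, 0 < k → k < w.length →
      ((w.map letterStep).take k).count .D < ((w.map letterStep).take k).count .U := by
    intro k h0 h1
    have h := hneg k h0 (by omega)
    have hc := count_map_letterStep (w.take k)
    rw [← List.map_take, hc.1, hc.2]
    unfold elev at h
    omega
  have hcount : (w.map letterStep).count .U = (w.map letterStep).count .D := by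
    rw [(count_map_letterStep w).1, (count_map_letterStep w).2]
    exact hbal.symm
  let d : DyckWord :=
    { toList := w.map letterStep
      count_U_eq_count_D := hcount
      count_D_le_count_U := by
        intro k
        rcases Nat.eq_zero_or_pos k with rfl | h0
        · simp
        rcases lt_or_ge k w.length with h1 | h1
        · exact (hlt k h0 h1).le
        · rw [List.take_of_length_le (by simpa using h1), hcount] }
  have hd : d.IsNested :=
    ⟨by rw [← DyckWord.toList_ne_nil]; simpa [d] using hne,
      fun k h0 h1 => hlt k h0 (by simpa [d] using h1)⟩
  refine ⟨d.denest hd, ?_⟩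
  rw [DyckWord.nest_denest]
  have hid : stepLetter ∘ letterStep = id := by
    funext b
    cases b <;> rfl
  simp [d, dyckWord, hid]

section Commute

variable {A : Type*} [Ring A] (f : FreeAlgebra ℂ Bool →+* A)

/-- If the image of `RL` commutes with the images of lower primes, it commutes with the images of
their products. -/
lemma commute_RL (hf : ∀ D, LowerPrime D → Commute (f (toA [true, false])) (f (toA D)))
    (p : DyckWord) : Commute (f (toA [true, false])) (f (toA (dyckWord p))) := by
  by_cases h : p = 0
  · subst h
    have : toA (dyckWord 0) = 1 := rfl
    simp [this]
  · have := DyckWord.semilength_outsidePart_lt h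
    rw [← DyckWord.nest_insidePart_add_outsidePart h, dyckWord_add, toA_append, map_mul]
    exact (hf _ (lowerPrime_nest _)).mul_right (commute_RL hf _)
termination_by p.semilength

/-- The identity `(L B R)(L C R) = L (RL) (B C) R` in any ring where `RL` commutes with `B`. -/
lemma nest_mul_nest (hf : ∀ D, LowerPrime D → Commute (f (toA [true, false])) (f (toA D)))
    (p q : DyckWord) :
    f (toA (dyckWord p.nest)) * f (toA (dyckWord q.nest)) =
      f (toA [false]) * f (toA [true, false]) *
        (f (toA (dyckWord p)) * f (toA (dyckWord q))) * f (toA [true]) := by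
  have h := (commute_RL f hf p).eq
  have hRL : toA [true, false] = toA [true] * toA [false] := toA_append [true] [false]
  calc f (toA (dyckWord p.nest)) * f (toA (dyckWord q.nest))
      = f (toA [false]) * (f (toA (dyckWord p)) * f (toA [true, false])) *
          f (toA (dyckWord q)) * f (toA [true]) := by
        simp only [dyckWord_nest, toA_append, hRL, map_mul, mul_assoc]
    _ = _ := by rw [← h]; simp only [mul_assoc]

/-- If the image of `RL` commutes with the images of lower primes, then the images of any two
products of lower primes commute. -/
lemma commute_dyck (hf : ∀ D, LowerPrime D → Commute (f (toA [true, false])) (f (toA D)))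
    (p q : DyckWord) : Commute (f (toA (dyckWord p))) (f (toA (dyckWord q))) := by
  have h0 : toA (dyckWord 0) = 1 := rfl
  by_cases hp : p = 0
  · subst hp
    simp [h0]
  by_cases hq : q = 0
  · subst hq
    simp [h0]
  have hsp := DyckWord.semilength_insidePart_add_semilength_outsidePart_add_one hp
  have hsq := DyckWord.semilength_insidePart_add_semilength_outsidePart_add_one hq
  have hnn : Commute (f (toA (dyckWord p.insidePart.nest)))
      (f (toA (dyckWord q.insidePart.nest))) := by
    have ih := commute_dyck hf p.insidePart q.insidePart
    rw [Commute, SemiconjBy, nest_mul_nest f hf, nest_mul_nest f hf, ih.eq]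
  have hop : Commute (f (toA (dyckWord p.outsidePart))) (f (toA (dyckWord q))) :=
    commute_dyck hf p.outsidePart q
  have hno : Commute (f (toA (dyckWord p.insidePart.nest)))
      (f (toA (dyckWord q.outsidePart))) :=
    commute_dyck hf p.insidePart.nest q.outsidePart
  have hnq : Commute (f (toA (dyckWord p.insidePart.nest))) (f (toA (dyckWord q))) := by
    rw [← DyckWord.nest_insidePart_add_outsidePart hq, dyckWord_add, toA_append, map_mul]
    exact hnn.mul_right hno
  rw [← DyckWord.nest_insidePart_add_outsidePart hp, dyckWord_add, toA_append, map_mul]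
  exact hnq.mul_left hop
termination_by p.semilength + q.semilength
decreasing_by all_goals (try rw [DyckWord.semilength_nest]); omega

end Commute

/-- for lower primes `P, Q`, the element `PQ - QP` lies in the
ideal generated by `{(RL)·D - D·(RL) : D lower prime}`. -/
theorem stmt9 (P Q : Word) (hP : LowerPrime P) (hQ : LowerPrime Q) :
    toA P * toA Q - toA Q * toA P ∈
      TwoSidedIdeal.span
        {x | ∃ D : Word, LowerPrime D ∧
          x = toA [true, false] * toA D - toA D * toA [true, false]} := by
  set I := TwoSidedIdeal.span
        {x | ∃ D : Word, LowerPrime D ∧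
          x = toA [true, false] * toA D - toA D * toA [true, false]} with hI
  have hker : ∀ a b, a * b - b * a ∈ I ↔ Commute (I.ringCon.mk' a) (I.ringCon.mk' b) := by
    intro a b
    conv_lhs => rw [← TwoSidedIdeal.ker_ringCon_mk' I]
    rw [TwoSidedIdeal.mem_ker, map_sub, map_mul, map_mul, sub_eq_zero]
    rfl
  obtain ⟨p, rfl⟩ := hP.exists_nest
  obtain ⟨q, rfl⟩ := hQ.exists_nest
  exact (hker _ _).2 <| commute_dyck _
    (fun D hD => (hker _ _).1 (TwoSidedIdeal.subset_span ⟨D, hD, rfl⟩)) _ _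
end

section
/- Let W be a balanced word. The following are equivalent: (i) W is reduced; (ii) W contains no contiguous subword of the form R Lⁿ R with n ≥ 2; (iii) W can be written as W = Lᵃ (RL)^{k₁} R (RL)^{k₂} R ⋯ (RL)^{k_m} R Lᵇ for some integers a, b, m ≥ 0 with a + b = m and integers k_i ≥ 0 for 1 ≤ i ≤ m. -/
/-- The final height of a word: number of `R`s minus number of `L`s. -/
def height (w : Word) : ℤ := (w.count true : ℤ) - (w.count false : ℤ)

/-- `W` contains a contiguous subword `R Lⁿ R` with `n ≥ 2`. -/
def HasValley (W : Word) : Prop :=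
  ∃ (W₁ W₂ : Word) (n : ℕ), 2 ≤ n ∧
    W = W₁ ++ [true] ++ List.replicate n false ++ [true] ++ W₂

/-- The word `(RL)^{k₁} R ⋯ (RL)^{k_m} R`. -/
def core (ks : List ℕ) : Word :=
  (ks.map (fun k => (List.replicate k [true, false]).flatten ++ [true])).flatten

/-! ### Heights and primes -/

lemma elev_eq_height (w : Word) (k : ℕ) : elev w k = height (w.take k) := rfl

lemma height_append (u v : Word) : height (u ++ v) = height u + height v := by
  simp only [height, List.count_append]; push_cast; ring

@[simp] lemma height_nil : height [] = 0 := by simp [height]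

lemma height_cons_true (w : Word) : height (true :: w) = height w + 1 := by
  simp [height]; ring

lemma height_cons_false (w : Word) : height (false :: w) = height w - 1 := by
  simp [height]; ring

lemma height_replicate (n : ℕ) : height (List.replicate n false) = -n := by
  simp [height, List.count_replicate]

lemma height_reverse (w : Word) : height w.reverse = height w := by
  simp [height]

lemma balanced_iff (w : Word) : BalancedWord w ↔ height w = 0 := by
  unfold BalancedWord height; omega

lemma elev_succ_le (w : Word) (k : ℕ) : elev w (k + 1) ≤ elev w k + 1 := by
  rw [elev_eq_height, elev_eq_height, List.take_add_one, height_append]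
  cases h : w[k]? with
  | none => simp
  | some b => cases b <;> simp [height]

/-- Splitting off a balanced prefix would give an interior zero of the elevation. -/
lemma isPrimeWord_of_elev_ne (w : Word) (h0 : w ≠ []) (hb : height w = 0)
    (h : ∀ k, 1 ≤ k → k ≤ w.length - 1 → elev w k ≠ 0) : IsPrimeWord w := by
  refine ⟨h0, (balanced_iff w).2 hb, ?_⟩
  rintro ⟨u, v, hu, hv, bu, -, rfl⟩
  have h1 := List.length_pos_iff.2 hu
  have h2 := List.length_pos_iff.2 hv
  refine h u.length h1 (by simp; omega) ?_
  rw [elev_eq_height, List.take_left]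
  exact (balanced_iff u).1 bu

lemma elev_reverse (w : Word) (hb : height w = 0) (k : ℕ) :
    elev w.reverse k = - elev w (w.length - k) := by
  rw [elev_eq_height, elev_eq_height, List.take_reverse, height_reverse]
  have := height_append (w.take (w.length - k)) (w.drop (w.length - k))
  rw [List.take_append_drop] at this
  omega

lemma upperPrime_reverse {w : Word} (h : LowerPrime w) : UpperPrime w.reverse := by
  have hb := (balanced_iff w).1 h.1.2.1
  have key : ∀ k, 1 ≤ k → k ≤ w.reverse.length - 1 → 0 < elev w.reverse k := by
    intro k h1 h2
    rw [List.length_reverse] at h2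
    have := h.2 (w.length - k) (by omega) (by omega)
    rw [elev_reverse w hb]; omega
  exact ⟨isPrimeWord_of_elev_ne _ (by simpa using h.1.1) (by rwa [height_reverse])
    fun k h1 h2 => (key k h1 h2).ne', key⟩

lemma lowerPrime_reverse {w : Word} (h : UpperPrime w) : LowerPrime w.reverse := by
  have hb := (balanced_iff w).1 h.1.2.1
  have key : ∀ k, 1 ≤ k → k ≤ w.reverse.length - 1 → elev w.reverse k < 0 := by
    intro k h1 h2
    rw [List.length_reverse] at h2
    have := h.2 (w.length - k) (by omega) (by omega)
    rw [elev_reverse w hb]; omega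
  exact ⟨isPrimeWord_of_elev_ne _ (by simpa using h.1.1) (by rwa [height_reverse])
    fun k h1 h2 => (key k h1 h2).ne, key⟩

/-- A path which starts downwards and ends at height at least `0` has a first return to `0`. -/
lemma exists_initial_lowerPrime (t : Word) (h : 0 ≤ height (false :: t)) :
    ∃ D rest : Word, LowerPrime D ∧ false :: t = D ++ rest := by
  classical
  set w : Word := false :: t with hw
  have ex : ∃ k, 1 ≤ k ∧ 0 ≤ elev w k :=
    ⟨w.length, by simp [hw], by rwa [elev_eq_height, List.take_length]⟩
  obtain ⟨k, hk⟩ : ∃ k, k = Nat.find ex := ⟨_, rfl⟩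
  have hs := Nat.find_spec ex
  have hmin : ∀ i, 1 ≤ i → i < k → elev w i < 0 := by
    intro i h1 h2
    by_contra hc
    exact Nat.find_min ex (hk ▸ h2) ⟨h1, not_lt.1 hc⟩
  rw [← hk] at hs
  have hlen : k ≤ w.length := by
    rw [hk]
    exact Nat.find_min' ex ⟨by simp [hw], by rwa [elev_eq_height, List.take_length]⟩
  have e1 : elev w 1 = -1 := by simp [hw, elev]
  have k2 : 2 ≤ k := by
    rcases Nat.lt_or_ge k 2 with hlt | hge
    · have : k = 1 := by omega
      rw [this] at hs; omega
    · exact hge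
  have e0 : elev w k = 0 := by
    have h1 := hmin (k - 1) (by omega) (by omega)
    have h2 := elev_succ_le w (k - 1)
    rw [Nat.sub_add_cancel hs.1] at h2
    omega
  have len : (w.take k).length = k := by simp [hlen]
  have key : ∀ i, 1 ≤ i → i ≤ (w.take k).length - 1 → elev (w.take k) i < 0 := by
    intro i h1 h2
    rw [len] at h2
    rw [elev_eq_height, List.take_take, min_eq_left (by omega)]
    exact hmin i h1 (by omega)
  refine ⟨w.take k, w.drop k, ⟨isPrimeWord_of_elev_ne _ ?_ e0
    fun i h1 h2 => (key i h1 h2).ne, key⟩, (List.take_append_drop k w).symm⟩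
  intro hnil
  rw [hnil] at len; simp at len; omega

lemma exists_final_upperPrime (t : Word) (h : 0 ≤ height (t ++ [false])) :
    ∃ U rest : Word, UpperPrime U ∧ t ++ [false] = rest ++ U := by
  obtain ⟨D, rest, hD, e⟩ := exists_initial_lowerPrime t.reverse (by
    have := height_reverse (t ++ [false])
    simp only [List.reverse_append, List.reverse_cons, List.reverse_nil, List.nil_append,
      List.singleton_append] at this
    rwa [this])
  refine ⟨D.reverse, rest.reverse, upperPrime_reverse hD, ?_⟩
  rw [← List.reverse_append, ← e]; simp

/-! ### Reduced words are the words without valleys -/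

lemma exists_last_true (w : Word) (h : true ∈ w) :
    ∃ (A : Word) (i : ℕ), w = A ++ [true] ++ List.replicate i false := by
  induction w using List.reverseRecOn with
  | nil => simp at h
  | append_singleton l b ih =>
    cases b with
    | true => exact ⟨l, 0, by simp⟩
    | false =>
      obtain ⟨A, i, rfl⟩ := ih (by simpa using h)
      exact ⟨A, i + 1, by simp [List.replicate_succ']⟩

lemma UpperPrime.exists_tail {U : Word} (h : UpperPrime U) :
    ∃ (A : Word) (i : ℕ), 1 ≤ i ∧ U = A ++ [true] ++ List.replicate i false := by
  have hb : height U = 0 := (balanced_iff U).1 h.1.2.1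
  have ht : true ∈ U := by
    by_contra hn
    have h0 : U.count true = 0 := List.count_eq_zero.2 hn
    have h1 : U.count false = 0 := by have := h.1.2.1; unfold BalancedWord at this; omega
    apply h.1.1
    rw [List.eq_nil_iff_forall_not_mem]
    rintro (_ | _)
    · exact List.count_eq_zero.1 h1
    · exact hn
  obtain ⟨A, i, rfl⟩ := exists_last_true U ht
  refine ⟨A, i, ?_, rfl⟩
  by_contra hi
  have hi0 : i = 0 := by omega
  subst hi0
  -- ending in `R`, the path would approach its final height `0` from below
  have hA : height A = -1 := by
    rw [List.replicate_zero, List.append_nil, height_append, height_cons_true] at hb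
    simp at hb; omega
  have hA0 : A ≠ [] := by rintro rfl; simp at hA
  have := h.2 A.length (List.length_pos_iff.2 hA0) (by simp)
  rw [elev_eq_height, List.append_assoc, List.take_left] at this
  omega

lemma LowerPrime.exists_head {D : Word} (h : LowerPrime D) :
    ∃ (B : Word) (j : ℕ), 1 ≤ j ∧ D = List.replicate j false ++ [true] ++ B := by
  obtain ⟨A, i, hi, e⟩ := (upperPrime_reverse h).exists_tail
  refine ⟨A.reverse, i, hi, ?_⟩
  rw [← List.reverse_reverse D, e]; simp

lemma reduced_of_not_hasValley {W : Word} (h : ¬ HasValley W) : Reduced W := by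
  rintro ⟨U, D, W₁, W₂, hU, hD, rfl⟩
  obtain ⟨A, i, hi, rfl⟩ := hU.exists_tail
  obtain ⟨B, j, hj, rfl⟩ := hD.exists_head
  exact h ⟨W₁ ++ A, B ++ W₂, i + j, by omega, by
    simp only [List.replicate_add, List.append_assoc]⟩

/-- The left half of the cut: `W₁ R Lⁱ` ends in an upper prime if it ends at height at least `0`,
or trivially (with the suffix `RL`) if `i = 1`. -/
lemma exists_upper_cut (W₁ : Word) (i : ℕ) (hi : 1 ≤ i)
    (h : i = 1 ∨ (i : ℤ) ≤ height (W₁ ++ [true])) :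
    ∃ U rest : Word, UpperPrime U ∧ W₁ ++ [true] ++ List.replicate i false = rest ++ U := by
  obtain ⟨i, rfl⟩ : ∃ k, i = k + 1 := ⟨i - 1, by omega⟩
  rw [List.replicate_succ', ← List.append_assoc]
  rcases h with h | h
  · obtain rfl : i = 0 := by omega
    obtain ⟨U, rest, hU, e⟩ := exists_final_upperPrime [true] (by simp [height])
    exact ⟨U, W₁ ++ rest, hU, by rw [List.append_assoc W₁ rest, ← e]; simp⟩
  · apply exists_final_upperPrime
    rw [height_append, height_append _ (List.replicate i false), height_replicate,
      height_cons_false]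
    push_cast at h
    simp; omega

lemma exists_lower_cut (W₂ : Word) (j : ℕ) (hj : 1 ≤ j)
    (h : j = 1 ∨ (j : ℤ) ≤ height ([true] ++ W₂)) :
    ∃ D rest : Word, LowerPrime D ∧ List.replicate j false ++ [true] ++ W₂ = D ++ rest := by
  obtain ⟨U, rest, hU, e⟩ := exists_upper_cut W₂.reverse j hj (by
    rw [← height_reverse] at h; simpa using h)
  refine ⟨U.reverse, rest.reverse, lowerPrime_reverse hU, ?_⟩
  rw [← List.reverse_append, ← e]; simp

lemma not_hasValley_of_reduced {W : Word} (hb : BalancedWord W) (h : Reduced W) :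
    ¬ HasValley W := by
  rintro ⟨W₁, W₂, n, hn, rfl⟩
  rw [balanced_iff, List.append_assoc _ [true] W₂, height_append, height_append,
    height_replicate] at hb
  -- `i` is the height after `W₁ R`, clamped to the interval `[1, n - 1]`
  obtain ⟨i, j, hi, hj, hij, h1, h2⟩ : ∃ i j : ℕ, 1 ≤ i ∧ 1 ≤ j ∧ i + j = n ∧
      (i = 1 ∨ (i : ℤ) ≤ height (W₁ ++ [true])) ∧
      (j = 1 ∨ (j : ℤ) ≤ height ([true] ++ W₂)) := by
    rcases le_or_gt (height (W₁ ++ [true])) 1 with hc | hc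
    · exact ⟨1, n - 1, by omega, by omega, by omega, by omega, by omega⟩
    · rcases le_or_gt (height (W₁ ++ [true])) (n - 1) with hd | hd
      · exact ⟨(height (W₁ ++ [true])).toNat, n - (height (W₁ ++ [true])).toNat,
          by omega, by omega, by omega, by omega, by omega⟩
      · exact ⟨n - 1, 1, by omega, by omega, by omega, by omega, by omega⟩
  obtain ⟨U, r₁, hU, e₁⟩ := exists_upper_cut W₁ i hi h1
  obtain ⟨D, r₂, hD, e₂⟩ := exists_lower_cut W₂ j hj h2
  refine h ⟨U, D, r₁, r₂, hU, hD, ?_⟩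
  rw [← e₁, List.append_assoc _ D, ← e₂, ← hij, List.replicate_add]
  simp only [List.append_assoc]

/-! ### Words without valleys and the normal form -/

@[simp] lemma core_nil : core [] = [] := rfl

lemma core_zero_cons (ks : List ℕ) : core (0 :: ks) = true :: core ks := by
  simp [core]

lemma core_succ_cons (k : ℕ) (ks : List ℕ) :
    core ((k + 1) :: ks) = true :: false :: core (k :: ks) := by
  simp [core, List.replicate_succ]

lemma core_cons_head (k : ℕ) (ks : List ℕ) : ∃ t, core (k :: ks) = true :: t := by
  cases k with
  | zero => exact ⟨_, core_zero_cons ks⟩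
  | succ k => exact ⟨_, core_succ_cons k ks⟩

lemma height_core (ks : List ℕ) : height (core ks) = ks.length := by
  induction ks with
  | nil => simp
  | cons k ks ih =>
    induction k with
    | zero => rw [core_zero_cons, height_cons_true, ih]; simp
    | succ k ihk =>
      rw [core_succ_cons, height_cons_true, height_cons_false, ihk]; simp

lemma HasValley.cons {W : Word} (h : HasValley W) (b : Bool) : HasValley (b :: W) := by
  obtain ⟨W₁, W₂, n, hn, rfl⟩ := h
  exact ⟨b :: W₁, W₂, n, hn, by simp⟩

lemma hasValley_cons {b : Bool} {W : Word} (h : HasValley (b :: W)) :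
    HasValley W ∨ b = true ∧ ∃ (W₂ : Word) (n : ℕ), 2 ≤ n ∧
      W = List.replicate n false ++ true :: W₂ := by
  obtain ⟨W₁, W₂, n, hn, e⟩ := h
  cases W₁ with
  | nil =>
    simp only [List.nil_append, List.append_assoc, List.cons_append, List.cons.injEq] at e
    exact Or.inr ⟨e.1, W₂, n, hn, e.2⟩
  | cons c W₁ =>
    simp only [List.cons_append, List.cons.injEq] at e
    exact Or.inl ⟨W₁, W₂, n, hn, e.2⟩

lemma exists_form (W : Word) (h : ¬ HasValley W) :
    ∃ (a b : ℕ) (ks : List ℕ),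
      W = List.replicate a false ++ core ks ++ List.replicate b false := by
  induction W with
  | nil => exact ⟨0, 0, [], rfl⟩
  | cons c W ih =>
    obtain ⟨a, b, ks, rfl⟩ := ih fun hv => h (hv.cons c)
    cases c with
    | false => exact ⟨a + 1, b, ks, by simp [List.replicate_succ]⟩
    | true =>
      cases ks with
      | nil => exact ⟨0, a + b, [0], by
          simp only [core_zero_cons, core_nil, List.replicate_add, List.replicate_zero,
            List.nil_append, List.append_nil, List.cons_append]⟩
      | cons k ks =>
        rcases a with _ | _ | a
        · exact ⟨0, b, 0 :: k :: ks, by simp [core_zero_cons]⟩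
        · exact ⟨0, b, (k + 1) :: ks, by simp [core_succ_cons]⟩
        · obtain ⟨t, ht⟩ := core_cons_head k ks
          refine absurd ⟨[], t ++ List.replicate b false, a + 2, by omega, ?_⟩ h
          simp [ht]

lemma not_hasValley_replicate (b : ℕ) : ¬ HasValley (List.replicate b false) := by
  rintro ⟨W₁, W₂, n, -, e⟩
  have : true ∈ List.replicate b false := by rw [e]; simp
  simp at this

lemma not_hasValley_core (ks : List ℕ) (b : ℕ) :
    ¬ HasValley (core ks ++ List.replicate b false) := by
  induction ks with
  | nil => simpa using not_hasValley_replicate b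
  | cons k ks ih =>
    induction k with
    | zero =>
      rw [core_zero_cons, List.cons_append]
      intro hv
      rcases hasValley_cons hv with hv | ⟨-, W₂, n, hn, e⟩
      · exact ih hv
      · cases ks with
        | nil =>
          have : true ∈ List.replicate b false := by
            rw [core_nil, List.nil_append] at e; rw [e]; simp
          simp at this
        | cons k ks =>
          obtain ⟨t, ht⟩ := core_cons_head k ks
          obtain ⟨n, rfl⟩ : ∃ m, n = m + 1 := ⟨n - 1, by omega⟩
          simp [ht, List.replicate_succ] at e
    | succ k ihk =>
      rw [core_succ_cons, List.cons_append, List.cons_append]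
      intro hv
      rcases hasValley_cons hv with hv | ⟨-, W₂, n, hn, e⟩
      · rcases hasValley_cons hv with hv | ⟨hf, -⟩
        · exact ihk hv
        · cases hf
      · obtain ⟨t, ht⟩ := core_cons_head k ks
        obtain ⟨n, rfl⟩ : ∃ m, n = m + 2 := ⟨n - 2, by omega⟩
        simp [ht, List.replicate_succ] at e

lemma not_hasValley_form (a b : ℕ) (ks : List ℕ) :
    ¬ HasValley (List.replicate a false ++ core ks ++ List.replicate b false) := by
  induction a with
  | zero => simpa using not_hasValley_core ks b
  | succ a ih =>
    intro hv
    rw [List.replicate_succ, List.cons_append, List.cons_append] at hv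
    rcases hasValley_cons hv with hv | ⟨hf, -⟩
    · exact ih hv
    · cases hf

/-- for a balanced word `W`, the following are equivalent:
`W` is reduced; `W` has no subword `R Lⁿ R` with `n ≥ 2`; `W` has the form
`Lᵃ (RL)^{k₁} R ⋯ (RL)^{k_m} R Lᵇ` with `a + b = m`. -/
theorem stmt18 (W : Word) (hbal : BalancedWord W) :
    (Reduced W ↔
      ¬ ∃ (W₁ W₂ : Word) (n : ℕ), 2 ≤ n ∧
        W = W₁ ++ [true] ++ List.replicate n false ++ [true] ++ W₂) ∧
    (Reduced W ↔
      ∃ (a b : ℕ) (ks : List ℕ), a + b = ks.length ∧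
        W = List.replicate a false ++
          (ks.map (fun k => (List.replicate k [true, false]).flatten ++ [true])).flatten ++
          List.replicate b false) := by
  have key : Reduced W ↔ ¬ HasValley W :=
    ⟨not_hasValley_of_reduced hbal, reduced_of_not_hasValley⟩
  refine ⟨key, key.trans ⟨fun h => ?_, ?_⟩⟩
  · obtain ⟨a, b, ks, rfl⟩ := exists_form W h
    refine ⟨a, b, ks, ?_, rfl⟩
    rw [balanced_iff, height_append, height_append, height_replicate, height_replicate,
      height_core] at hbal
    omega
  · rintro ⟨a, b, ks, -, rfl⟩
    exact not_hasValley_form a b ks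
end
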